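/- (Necessity in the main theorem.) Consider the system ẋ = f(x) + g₁(x)u₁ + g₂(x)u₂ on an open set U ⊆ ℝⁿ, n ≥ 2, with f, g₁, g₂ smooth, and let p ∈ U. Suppose the system is transformable into the triangular form (3) near p: there exist an open neighborhood V ⊆ U of p, a diffeomorphism φ : V → φ(V) ⊆ ℝⁿ, smooth maps α : V → ℝ² and β : V → ℝ^{2×2} with β(x) invertible for all x ∈ V, and smooth functions φ₁, …, φ_{n−2} with φᵢ depending only on the variables z₁, …, z_{i+1}, zₙ (for 1 ≤ i ≤ n−2), such that for all x ∈ V and all v ∈ ℝ²: Dφ(x)( f(x) + Σ_{i=1}^{2}(αᵢ(x) + Σ_{j=1}^{2} β_{ij}(x) vⱼ) gᵢ(x) ) = ( φ₁(z) + z₂v₁, φ₂(z) + z₃v₁, …, φ_{n−2}(z) + z_{n−1}v₁, v₂, v₁ ) with z = φ(x). Then there exists an open neighborhood W ⊆ U of p such that: (1) dim F_k(q) = dim G_k(q) = 2 + k for all 0 ≤ k ≤ n−2 and all q ∈ W, where (F_k), (G_k) are the Lie and derived flags of Δ = span_{C^∞(U)}{g₁, g₂}; and (2) (L_f ω)(q)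 ∈ Cᵏ_q for all 1 ≤ k ≤ n−3, all q ∈ W and all ω ∈ Λᵏ, where Λᵏ = (G_k)^⊥ and Cᵏ_q = C(Λᵏ)_q. -/

import Mathlib

noncomputable section

/-- A vector field on (an open subset of) `ℝⁿ`, represented as a total map. -/
abbrev VF (n : ℕ) := (Fin n → ℝ) → (Fin n → ℝ)

/-- Lie bracket `[X,Y](x) = DY(x)(X(x)) − DX(x)(Y(x))`. -/
def lieBracket {n : ℕ} (X Y : VF n) : VF n :=
  fun x => fderiv ℝ Y x (X x) - fderiv ℝ X x (Y x)

/-- Span over `C^∞(U)` of a set of vector fields (membership only constrains values on `U`). -/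
def spanOn {n : ℕ} (U : Set (Fin n → ℝ)) (S : Set (VF n)) : Set (VF n) :=
  { X | ∃ (m : ℕ) (c : Fin m → (Fin n → ℝ) → ℝ) (Y : Fin m → VF n),
      (∀ i, ContDiffOn ℝ (⊤ : ℕ∞) (c i) U) ∧ (∀ i, Y i ∈ S) ∧
      ∀ x ∈ U, X x = ∑ i, c i x • Y i x }

/-- Sum of two distributions (as equality of values on `U`). -/
def addOn {n : ℕ} (U : Set (Fin n → ℝ)) (A B : Set (VF n)) : Set (VF n) :=
  { X | ∃ Y ∈ A, ∃ Z ∈ B, ∀ x ∈ U, X x = Y x + Z x }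

/-- The set of brackets `[X,Y]`, `X ∈ A`, `Y ∈ B`. -/
def bracketSet {n : ℕ} (A B : Set (VF n)) : Set (VF n) :=
  { Z | ∃ X ∈ A, ∃ Y ∈ B, Z = lieBracket X Y }

/-- The Lie flag: `F₀ = Δ`, `F_{k+1} = F_k + span_{C^∞(U)}{[X,Y] : X ∈ F_k, Y ∈ F₀}`. -/
def lieFlag {n : ℕ} (U : Set (Fin n → ℝ)) (Δ : Set (VF n)) : ℕ → Set (VF n)
  | 0 => Δ
  | k + 1 => addOn U (lieFlag U Δ k) (spanOn U (bracketSet (lieFlag U Δ k) Δ))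

/-- The derived flag: `G₀ = Δ`, `G_{k+1} = G_k + span_{C^∞(U)}{[X,Y] : X, Y ∈ G_k}`. -/
def derivedFlag {n : ℕ} (U : Set (Fin n → ℝ)) (Δ : Set (VF n)) : ℕ → Set (VF n)
  | 0 => Δ
  | k + 1 => addOn U (derivedFlag U Δ k)
      (spanOn U (bracketSet (derivedFlag U Δ k) (derivedFlag U Δ k)))

end

noncomputable section

/-- Covectors on `ℝⁿ`. -/
abbrev Covector (n : ℕ) := (Fin n → ℝ) →L[ℝ] ℝ

/-- A 1-form on (an open subset of) `ℝⁿ`, represented as a total map. -/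
abbrev OneForm (n : ℕ) := (Fin n → ℝ) → Covector n

/-- The interior product `ι_v dω(q)`, i.e. the covector
`w ↦ dω(q)(v,w) = (Dω(q)(v))(w) − (Dω(q)(w))(v)`. -/
def intExtDer {n : ℕ} (ω : OneForm n) (q v : Fin n → ℝ) : Covector n :=
  fderiv ℝ ω q v - (fderiv ℝ ω q).flip v

/-- The Lie derivative of a 1-form along a vector field:
`(L_X ω)(q)(v) = (Dω(q)(X(q)))(v) + ω(q)(DX(q)(v))`. -/
def lieDerOneForm {n : ℕ} (X : VF n) (ω : OneForm n) (q : Fin n → ℝ) : Covector n :=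
  fderiv ℝ ω q (X q) + (ω q).comp (fderiv ℝ X q)

/-- The annihilator `A^⊥` of a set `A` of vector fields: the smooth 1-forms `ω` on `U`
with `ω(x)(X(x)) = 0` for all `X ∈ A`, `x ∈ U`. -/
def annihilatorOn {n : ℕ} (U : Set (Fin n → ℝ)) (A : Set (VF n)) : Set (OneForm n) :=
  { ω | ContDiffOn ℝ (⊤ : ℕ∞) ω U ∧ ∀ X ∈ A, ∀ x ∈ U, ω x (X x) = 0 }

/-- The associated (Cauchy characteristic) space of a codistribution `Λ` at `q`. -/
def assocOf {n : ℕ} (Λ : Set (OneForm n)) (q : Fin n → ℝ) : Set (Fin n → ℝ) :=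
  { v | ∀ ω ∈ Λ, ω q v = 0 ∧
      intExtDer ω q v ∈ Submodule.span ℝ { ξ : Covector n | ∃ ρ ∈ Λ, ξ = ρ q } }

/-- The retracting space `C(Λ)_q`, the annihilator of the associated space. -/
def retractOf {n : ℕ} (Λ : Set (OneForm n)) (q : Fin n → ℝ) : Set (Covector n) :=
  { ξ | ∀ v ∈ assocOf Λ q, ξ v = 0 }

/-- `dim Δ(q)`: the dimension of `Δ_q = {X(q) : X ∈ Δ} ⊆ ℝⁿ`. -/
def evalDim {n : ℕ} (A : Set (VF n)) (q : Fin n → ℝ) : ℕ :=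
  Module.finrank ℝ ↥(Submodule.span ℝ { w : Fin n → ℝ | ∃ X ∈ A, w = X q })

/-- The right-hand side of the triangular form (3), with 0-based components:
component `j ≤ n−3` is `φ_{j+1}(z) + z_{j+2} v₁` (1-based), component `n−2` is `v₂` and
component `n−1` is `v₁`.  Here `Φ i` is the 1-based function `φ_{i+1}`. -/
def triRHS (n : ℕ) (Φ : ℕ → (Fin n → ℝ) → ℝ) (z : Fin n → ℝ) (v : Fin 2 → ℝ) :
    Fin n → ℝ :=
  fun j => if h : j.1 + 3 ≤ n then Φ j.1 z + z ⟨j.1 + 1, by omega⟩ * v 0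
           else if j.1 + 2 = n then v 1 else v 0

/-- The system `ẋ = f + g₁u₁ + g₂u₂` is transformable into the triangular form (3)
near `p`: on an open neighborhood `V ⊆ U` of `p` there are a diffeomorphism `φ` onto
`φ(V)` and a regular static state feedback `u = α + βv` such that the closed-loop
vector field is pushed forward by `φ` to the triangular form, where each `φᵢ = Φ (i-1)`
depends only on `z₁, …, z_{i+1}, zₙ`. -/
def IsTriangularizableAt (n : ℕ) (U : Set (Fin n → ℝ)) (f g1 g2 : VF n)
    (p : Fin n → ℝ) : Prop :=
  ∃ V : Set (Fin n → ℝ), IsOpen V ∧ p ∈ V ∧ V ⊆ U ∧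
    ∃ φ ψ : (Fin n → ℝ) → (Fin n → ℝ),
      ContDiffOn ℝ (⊤ : ℕ∞) φ V ∧ IsOpen (φ '' V) ∧ ContDiffOn ℝ (⊤ : ℕ∞) ψ (φ '' V) ∧
      (∀ x ∈ V, ψ (φ x) = x) ∧
      ∃ (α : (Fin n → ℝ) → Fin 2 → ℝ) (β : (Fin n → ℝ) → Fin 2 → Fin 2 → ℝ),
        (∀ i, ContDiffOn ℝ (⊤ : ℕ∞) (fun x => α x i) V) ∧
        (∀ i j, ContDiffOn ℝ (⊤ : ℕ∞) (fun x => β x i j) V) ∧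
        (∀ x ∈ V, β x 0 0 * β x 1 1 - β x 0 1 * β x 1 0 ≠ 0) ∧
        ∃ Φ : ℕ → (Fin n → ℝ) → ℝ,
          (∀ i, i + 3 ≤ n → ContDiffOn ℝ (⊤ : ℕ∞) (Φ i) (φ '' V)) ∧
          (∀ i, i + 3 ≤ n → ∀ z z' : Fin n → ℝ,
            (∀ j : Fin n, (j.1 ≤ i + 1 ∨ j.1 + 1 = n) → z j = z' j) → Φ i z = Φ i z') ∧
          ∀ x ∈ V, ∀ v : Fin 2 → ℝ,
            fderiv ℝ φ x (f x
                + (α x 0 + β x 0 0 * v 0 + β x 0 1 * v 1) • g1 x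
                + (α x 1 + β x 1 0 * v 0 + β x 1 1 * v 1) • g2 x) =
              triRHS n Φ (φ x) v

/-- Conditions 1) and 2) of the main theorem on the set `W`:
1) `dim F_k(q) = dim G_k(q) = 2 + k` for `0 ≤ k ≤ n−2`, `q ∈ W`;
2) `(L_f ω)(q) ∈ Cᵏ_q` for `1 ≤ k ≤ n−3`, `q ∈ W`, `ω ∈ Λᵏ = (G_k)^⊥`. -/
def MainConditionsOn (n : ℕ) (U W : Set (Fin n → ℝ)) (f g1 g2 : VF n) : Prop :=
  (∀ k : ℕ, k + 2 ≤ n → ∀ q ∈ W,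
      evalDim (lieFlag U (spanOn U {g1, g2}) k) q = 2 + k ∧
      evalDim (derivedFlag U (spanOn U {g1, g2}) k) q = 2 + k) ∧
  (∀ k : ℕ, 1 ≤ k → k + 3 ≤ n → ∀ q ∈ W,
      ∀ ω ∈ annihilatorOn U (derivedFlag U (spanOn U {g1, g2}) k),
        lieDerOneForm f ω q ∈
          retractOf (annihilatorOn U (derivedFlag U (spanOn U {g1, g2}) k)) q)

end

noncomputable section

/-!
In the coordinates `z` of the triangular form the input distribution is cut out by the forms
`λᵢ = dzᵢ - zᵢ₊₁ dzₙ`, `1 ≤ i ≤ n - 2`, and `dλᵢ = dzₙ ∧ dzᵢ₊₁`. Let `Dₖ` be the common kernel of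
`λ₁, …, λₙ₋₂₋ₖ`. Since `dzᵢ₊₁ = zᵢ₊₂ dzₙ` on `Dₖ` for `i + 1 ≤ n - 2 - k`, brackets of sections of
`Dₖ` lie in `Dₖ₊₁`, so `Gₖ ⊆ Dₖ`. Conversely, repeated brackets of `∂/∂zₙ₋₁` with the first input
field `(z₂, …, zₙ₋₁, 0, 1)` are `∂/∂zₙ₋₂, ∂/∂zₙ₋₃, …`, so `Fₖ` already fills `Dₖ`, which has
dimension `2 + k`.

The formula for `dλᵢ` also shows that `dz₁, …, dzₙ₋₁₋ₖ, dzₙ` vanish on the associated space of `Λᵏ`.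
Extend a vector `v` of that space to a field `Y` with constant coordinates. By the triangular
dependence of the drift, `(L_f λᵢ)(v) = 0` for `i ≤ n - 2 - k`; hence `[f, Y] ∈ Dₖ` at the given
point, and `(L_f ω)(v) = f(ω(Y)) - ω([f, Y]) = 0` for every `ω ∈ Λᵏ`.
-/

section

open Filter Topology

theorem mem_of_forall_single_mem {ι R : Type*} [Finite ι] [DecidableEq ι] [Semiring R]
    {S : Submodule R (ι → R)} {u : ι → R} (h : ∀ j, u j ≠ 0 → Pi.single j 1 ∈ S) : u ∈ S := by
  have := Fintype.ofFinite ι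
  rw [pi_eq_sum_univ' u]
  refine S.sum_mem fun j _ => ?_
  by_cases hj : u j = 0
  · simp [hj]
  · exact S.smul_mem _ (h j hj)

section Calculus

variable {E F : Type*} [NormedAddCommGroup E] [NormedSpace ℝ E] [NormedAddCommGroup F]
  [NormedSpace ℝ F]

theorem exists_contDiff_smul_of_contDiffOn [FiniteDimensional ℝ E] {V : Set E} (hV : IsOpen V)
    {q : E} (hq : q ∈ V) {a : E → F} (ha : ContDiffOn ℝ (⊤ : ℕ∞) a V) :
    ∃ χ : E → ℝ, χ =ᶠ[𝓝 q] 1 ∧ Function.support χ ⊆ V ∧ ContDiff ℝ (⊤ : ℕ∞) fun x => χ x • a x := by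
  obtain ⟨r, hr, hrV⟩ := Metric.nhds_basis_closedBall.mem_iff.1 (hV.mem_nhds hq)
  let χ : ContDiffBump q := ⟨r / 2, r, half_pos hr, half_lt_self hr⟩
  have hχV : tsupport χ ⊆ V := χ.tsupport_eq.trans_subset hrV
  refine ⟨χ, χ.eventuallyEq_one, (subset_tsupport _).trans hχV, contMDiff_iff_contDiff.1 ?_⟩
  refine contMDiff_of_tsupport fun x hx => ContDiffAt.contMDiffAt ?_
  have hxV : x ∈ V := hχV (tsupport_smul_subset_left _ _ hx)
  exact χ.contDiffAt.smul (ha.contDiffAt (hV.mem_nhds hxV))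

theorem differentiableAt_fderiv_of_contDiffAt_two {a : E → F} {x : E}
    (ha : ContDiffAt ℝ 2 a x) : DifferentiableAt ℝ (fderiv ℝ a) x :=
  (ha.fderiv_right (m := 1) (by norm_num)).differentiableAt one_ne_zero

theorem fderiv_apply_eq_zero_of_dependsOn {ι : Type*} [Finite ι] {P : (ι → ℝ) → ℝ} {s : Set ι}
    (hP : DependsOn P s) {z w : ι → ℝ} (hPz : DifferentiableAt ℝ P z) (hw : ∀ j ∈ s, w j = 0) :
    fderiv ℝ P z w = 0 := by
  have := Fintype.ofFinite ι
  have hconst : (fun t : ℝ => P (z + t • w)) = fun _ => P z :=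
    funext fun t => hP fun j hj => by simp [hw j hj]
  rw [← hPz.lineDeriv_eq_fderiv, lineDeriv, hconst, deriv_const]

end Calculus

section Distributions

variable {n : ℕ} {U V : Set (Fin n → ℝ)} {S T A Δ : Set (VF n)} {X Y : VF n} {q : Fin n → ℝ}

/-- The space `Δ_q = {X(q) : X ∈ Δ}` of values at `q`, whose dimension is `evalDim Δ q`. -/
def evalSpan (A : Set (VF n)) (q : Fin n → ℝ) : Submodule ℝ (Fin n → ℝ) :=
  Submodule.span ℝ {w | ∃ X ∈ A, w = X q}

theorem apply_mem_evalSpan (hX : X ∈ A) : X q ∈ evalSpan A q :=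
  Submodule.subset_span ⟨X, hX, rfl⟩

theorem evalSpan_le_iff {D : Submodule ℝ (Fin n → ℝ)} :
    evalSpan A q ≤ D ↔ ∀ X ∈ A, X q ∈ D := by
  refine Submodule.span_le.trans ⟨fun h X hX => h ⟨X, hX, rfl⟩, ?_⟩
  rintro h _ ⟨X, hX, rfl⟩
  exact h X hX

theorem evalSpan_mono (h : S ⊆ T) : evalSpan S q ≤ evalSpan T q :=
  evalSpan_le_iff.2 fun _ hX => apply_mem_evalSpan (h hX)

theorem zero_mem_spanOn : (fun _ => 0) ∈ spanOn U S :=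
  ⟨0, fun i => i.elim0, fun i => i.elim0, fun i => i.elim0, fun i => i.elim0, by simp⟩

theorem subset_spanOn : S ⊆ spanOn U S := fun X hX =>
  ⟨1, fun _ _ => 1, fun _ => X, fun _ => contDiffOn_const, fun _ => hX, by simp⟩

theorem spanOn_mono (h : S ⊆ T) : spanOn U S ⊆ spanOn U T := by
  rintro X ⟨l, c, Y, hc, hY, hX⟩
  exact ⟨l, c, Y, hc, fun i => h (hY i), hX⟩

theorem apply_mem_of_mem_spanOn {D : Submodule ℝ (Fin n → ℝ)} (hq : q ∈ U)
    (hS : ∀ Y ∈ S, Y q ∈ D) (hX : X ∈ spanOn U S) : X q ∈ D := by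
  obtain ⟨l, c, Y, -, hY, hX⟩ := hX
  rw [hX q hq]
  exact D.sum_mem fun i _ => D.smul_mem _ (hS _ (hY i))

theorem contDiffOn_of_mem_spanOn (hS : ∀ Y ∈ S, ContDiffOn ℝ (⊤ : ℕ∞) Y U) (hX : X ∈ spanOn U S) :
    ContDiffOn ℝ (⊤ : ℕ∞) X U := by
  obtain ⟨l, c, Y, hc, hY, hX⟩ := hX
  exact (ContDiffOn.sum fun i _ => (hc i).smul (hS _ (hY i))).congr hX

theorem exists_mem_spanOn_pair_eventuallyEq (hV : IsOpen V) (hq : q ∈ V)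
    {a b : (Fin n → ℝ) → ℝ} (ha : ContDiffOn ℝ (⊤ : ℕ∞) a V) (hb : ContDiffOn ℝ (⊤ : ℕ∞) b V) :
    ∃ Z ∈ spanOn U {X, Y}, Z =ᶠ[𝓝 q] fun x => a x • X x + b x • Y x := by
  obtain ⟨χ, hχ, -, hχa⟩ := exists_contDiff_smul_of_contDiffOn hV hq ha
  obtain ⟨η, hη, -, hηb⟩ := exists_contDiff_smul_of_contDiffOn hV hq hb
  refine ⟨fun x => (χ x • a x) • X x + (η x • b x) • Y x,
    ⟨2, ![fun x => χ x • a x, fun x => η x • b x], ![X, Y], ?_, ?_, ?_⟩, ?_⟩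
  · simpa [Fin.forall_fin_two] using ⟨hχa.contDiffOn, hηb.contDiffOn⟩
  · simp [Fin.forall_fin_two]
  · simp [Fin.sum_univ_two]
  · filter_upwards [hχ, hη] with x hχx hηx
    simp [hχx, hηx]

theorem contDiffOn_lieBracket (hU : IsOpen U) (hX : ContDiffOn ℝ (⊤ : ℕ∞) X U)
    (hY : ContDiffOn ℝ (⊤ : ℕ∞) Y U) : ContDiffOn ℝ (⊤ : ℕ∞) (lieBracket X Y) U := fun _ hx =>
  ((hX.contDiffAt (hU.mem_nhds hx)).lieBracket_vectorField (hY.contDiffAt (hU.mem_nhds hx))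
    (by simp)).contDiffWithinAt

theorem derivedFlag_subset_succ (k : ℕ) : derivedFlag U Δ k ⊆ derivedFlag U Δ (k + 1) :=
  fun X hX => ⟨X, hX, fun _ => 0, zero_mem_spanOn, by simp⟩

theorem subset_derivedFlag (k : ℕ) : Δ ⊆ derivedFlag U Δ k := by
  induction k with
  | zero => exact subset_rfl
  | succ k ih => exact ih.trans (derivedFlag_subset_succ k)

theorem lieFlag_mono : Monotone (lieFlag U Δ) :=
  monotone_nat_of_le_succ fun _ X hX => ⟨X, hX, fun _ => 0, zero_mem_spanOn, by simp⟩

theorem lieFlag_subset_derivedFlag (k : ℕ) : lieFlag U Δ k ⊆ derivedFlag U Δ k := by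
  induction k with
  | zero => exact subset_rfl
  | succ k ih =>
    rintro X ⟨Y, hY, Z, hZ, hX⟩
    refine ⟨Y, ih hY, Z, spanOn_mono ?_ hZ, hX⟩
    rintro _ ⟨A, hA, B, hB, rfl⟩
    exact ⟨A, ih hA, B, subset_derivedFlag k hB, rfl⟩

theorem lieBracket_mem_lieFlag_succ (h0 : (fun _ => 0) ∈ Δ) {k : ℕ} (hX : X ∈ lieFlag U Δ k)
    (hY : Y ∈ Δ) : lieBracket X Y ∈ lieFlag U Δ (k + 1) :=
  ⟨fun _ => 0, lieFlag_mono k.zero_le h0, lieBracket X Y,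
    subset_spanOn ⟨X, hX, Y, hY, rfl⟩, by simp⟩

theorem contDiffOn_of_mem_derivedFlag (hU : IsOpen U) (hΔ : ∀ X ∈ Δ, ContDiffOn ℝ (⊤ : ℕ∞) X U)
    (k : ℕ) : ∀ X ∈ derivedFlag U Δ k, ContDiffOn ℝ (⊤ : ℕ∞) X U := by
  induction k with
  | zero => exact hΔ
  | succ k ih =>
    rintro X ⟨Y, hY, Z, hZ, hX⟩
    refine ((ih Y hY).add (contDiffOn_of_mem_spanOn ?_ hZ)).congr hX
    rintro _ ⟨A, hA, B, hB, rfl⟩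
    exact contDiffOn_lieBracket hU (ih A hA) (ih B hB)

end Distributions

section OneForms

variable {n : ℕ} {U V : Set (Fin n → ℝ)} {A : Set (VF n)} {ω η : OneForm n} {X Y : VF n}
  {q v : Fin n → ℝ}

theorem apply_eq_zero_of_mem_evalSpan (hω : ω ∈ annihilatorOn U A) (hq : q ∈ U)
    (hv : v ∈ evalSpan A q) : ω q v = 0 := by
  have hker : evalSpan A q ≤ LinearMap.ker (ω q).toLinearMap :=
    evalSpan_le_iff.2 fun X hX => hω.2 X hX q hq
  exact hker hv

theorem exists_mem_annihilatorOn_eventuallyEq (hV : IsOpen V) (hq : q ∈ V)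
    (hω : ω ∈ annihilatorOn V A) : ∃ η ∈ annihilatorOn U A, η =ᶠ[𝓝 q] ω := by
  obtain ⟨χ, hχ, hχV, hχω⟩ := exists_contDiff_smul_of_contDiffOn hV hq hω.1
  refine ⟨fun x => χ x • ω x, ⟨hχω.contDiffOn, fun X hX x _ => ?_⟩, ?_⟩
  · by_cases hx : x ∈ V
    · simp [hω.2 X hX x hx]
    · simp [Function.notMem_support.1 (Set.notMem_subset hχV hx)]
  · filter_upwards [hχ] with x hχx
    simp [hχx]

theorem intExtDer_apply_eq_zero_of_mem_assocOf (hq : q ∈ U)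
    (hv : v ∈ assocOf (annihilatorOn U A) q) (hω : ω ∈ annihilatorOn U A) (hX : X ∈ A) :
    intExtDer ω q v (X q) = 0 := by
  have hle : Submodule.span ℝ {ξ : Covector n | ∃ ρ ∈ annihilatorOn U A, ξ = ρ q} ≤
      LinearMap.ker (ContinuousLinearMap.apply ℝ ℝ (X q)).toLinearMap := by
    refine Submodule.span_le.2 ?_
    rintro _ ⟨ρ, hρ, rfl⟩
    exact hρ.2 X hX q hq
  exact hle (hv ω hω).2

theorem intExtDer_congr (h : ω =ᶠ[𝓝 q] η) : intExtDer ω q = intExtDer η q := by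
  funext v
  rw [intExtDer, intExtDer, h.fderiv_eq]

theorem intExtDer_sub (hω : DifferentiableAt ℝ ω q) (hη : DifferentiableAt ℝ η q) :
    intExtDer (fun x => ω x - η x) q v = intExtDer ω q v - intExtDer η q v := by
  ext w
  simp only [intExtDer, fderiv_fun_sub hω hη, sub_apply, ContinuousLinearMap.flip_apply]
  ring

theorem intExtDer_smul {a : (Fin n → ℝ) → ℝ} (ha : DifferentiableAt ℝ a q)
    (hω : DifferentiableAt ℝ ω q) :
    intExtDer (fun x => a x • ω x) q v =
      a q • intExtDer ω q v + fderiv ℝ a q v • ω q - ω q v • fderiv ℝ a q := by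
  ext w
  simp only [intExtDer, fderiv_fun_smul ha hω, sub_apply, add_apply, smul_apply,
    ContinuousLinearMap.flip_apply, ContinuousLinearMap.smulRight_apply, smul_eq_mul]
  ring

theorem intExtDer_fderiv {h : (Fin n → ℝ) → ℝ} (hh : ContDiffAt ℝ 2 h q) :
    intExtDer (fderiv ℝ h) q v = 0 := by
  ext w
  have hsymm : IsSymmSndFDerivAt ℝ h q := hh.isSymmSndFDerivAt (by simp)
  simp [intExtDer, hsymm.eq v w]

theorem lieDerOneForm_apply_eq_intExtDer_add (hω : DifferentiableAt ℝ ω q)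
    (hX : DifferentiableAt ℝ X q) :
    lieDerOneForm X ω q v = intExtDer ω q (X q) v + fderiv ℝ (fun x => ω x (X x)) q v := by
  simp [lieDerOneForm, intExtDer, fderiv_clm_apply hω hX]

theorem lieDerOneForm_apply_eq_sub_apply_lieBracket (hω : DifferentiableAt ℝ ω q)
    (hY : DifferentiableAt ℝ Y q) :
    lieDerOneForm X ω q (Y q) =
      fderiv ℝ (fun x => ω x (Y x)) q (X q) - ω q (lieBracket X Y q) := by
  simp [lieDerOneForm, lieBracket, fderiv_clm_apply hω hY]

theorem apply_lieBracket_eq_neg_intExtDer (hω : DifferentiableAt ℝ ω q)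
    (hX : DifferentiableAt ℝ X q) (hY : DifferentiableAt ℝ Y q)
    (hωX : (fun x => ω x (X x)) =ᶠ[𝓝 q] 0) (hωY : (fun x => ω x (Y x)) =ᶠ[𝓝 q] 0) :
    ω q (lieBracket X Y q) = -intExtDer ω q (X q) (Y q) := by
  have hcartan := lieDerOneForm_apply_eq_intExtDer_add (v := Y q) hω hX
  rw [lieDerOneForm_apply_eq_sub_apply_lieBracket hω hY, hωX.fderiv_eq, hωY.fderiv_eq] at hcartan
  simpa [neg_eq_iff_eq_neg] using hcartan

end OneForms

section ContactForms

variable {m k : ℕ} {φ : VF (m + 2)} {X Y : VF (m + 2)} {x v w : Fin (m + 2) → ℝ} {i : Fin m}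

/-- The forms `λᵢ = dφᵢ - φᵢ₊₁ dφₙ`, `1 ≤ i ≤ n - 2`, attached to a coordinate system `φ` on `ℝⁿ`.
We write `n = m + 2` and index by `Fin m`, so that the coordinates `φᵢ`, `φᵢ₊₁`, `φₙ` have the
indices `i.castSucc.castSucc`, `i.succ.castSucc` and `Fin.last (m + 1)`. -/
def contactForm (φ : VF (m + 2)) (i : Fin m) : OneForm (m + 2) := fun x =>
  fderiv ℝ (fun y => φ y i.castSucc.castSucc) x -
    φ x i.succ.castSucc • fderiv ℝ (fun y => φ y (Fin.last (m + 1))) x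

theorem contactForm_apply (hφ : DifferentiableAt ℝ φ x) :
    contactForm φ i x v = fderiv ℝ φ x v i.castSucc.castSucc -
      φ x i.succ.castSucc * fderiv ℝ φ x v (Fin.last (m + 1)) := by
  simp [contactForm, fderiv_apply hφ]

theorem contDiffOn_contactForm {V : Set (Fin (m + 2) → ℝ)} (hV : IsOpen V)
    (hφ : ContDiffOn ℝ (⊤ : ℕ∞) φ V) : ContDiffOn ℝ (⊤ : ℕ∞) (contactForm φ i) V := by
  have hcoord (j) : ContDiffOn ℝ (⊤ : ℕ∞) (fun y => φ y j) V := contDiffOn_pi.1 hφ j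
  exact ((hcoord _).fderiv_of_isOpen hV (by simp)).sub
    ((hcoord _).smul ((hcoord _).fderiv_of_isOpen hV (by simp)))

theorem differentiableAt_contactForm (hφ : ContDiffAt ℝ 2 φ x) :
    DifferentiableAt ℝ (contactForm φ i) x := by
  have hcoord (j) : ContDiffAt ℝ 2 (fun y => φ y j) x := contDiffAt_pi.1 hφ j
  have hdcoord (j) : DifferentiableAt ℝ (fderiv ℝ fun y => φ y j) x :=
    differentiableAt_fderiv_of_contDiffAt_two (hcoord j)
  exact (hdcoord _).sub (((hcoord _).differentiableAt two_ne_zero).smul (hdcoord _))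

theorem intExtDer_contactForm_apply (hφ : ContDiffAt ℝ 2 φ x) :
    intExtDer (contactForm φ i) x v w =
      fderiv ℝ φ x v (Fin.last (m + 1)) * fderiv ℝ φ x w i.succ.castSucc -
        fderiv ℝ φ x v i.succ.castSucc * fderiv ℝ φ x w (Fin.last (m + 1)) := by
  have hcoord (j) : ContDiffAt ℝ 2 (fun y => φ y j) x := contDiffAt_pi.1 hφ j
  have hdcoord (j) : DifferentiableAt ℝ (fderiv ℝ fun y => φ y j) x :=
    differentiableAt_fderiv_of_contDiffAt_two (hcoord j)
  have hdφ : DifferentiableAt ℝ φ x := hφ.differentiableAt two_ne_zero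
  have hd (j) : DifferentiableAt ℝ (fun y => φ y j) x := differentiableAt_pi.1 hdφ j
  unfold contactForm
  rw [intExtDer_sub (hdcoord _) ((hd _).fun_smul (hdcoord _)), intExtDer_smul (hd _) (hdcoord _),
    intExtDer_fderiv (hcoord _), intExtDer_fderiv (hcoord _)]
  simp [fderiv_apply hdφ]

/-- The distribution `Dₖ = {λᵢ = 0 : 1 ≤ i ≤ n - 2 - k}`, which turns out to be the value of the
`k`-th terms of both flags. -/
def contactDistribution (φ : VF (m + 2)) (k : ℕ) (x : Fin (m + 2) → ℝ) :
    Submodule ℝ (Fin (m + 2) → ℝ) :=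
  ⨅ (i : Fin m) (_ : i + k < m), LinearMap.ker (contactForm φ i x).toLinearMap

theorem mem_contactDistribution :
    v ∈ contactDistribution φ k x ↔ ∀ i : Fin m, i + k < m → contactForm φ i x v = 0 := by
  simp [contactDistribution]

theorem contactDistribution_mono : Monotone fun k => contactDistribution φ k x := by
  intro k l hkl v hv
  rw [mem_contactDistribution] at hv ⊢
  exact fun i hi => hv i (by omega)

theorem intExtDer_contactForm_apply_eq_zero (hφ : ContDiffAt ℝ 2 φ x)
    (hv : v ∈ contactDistribution φ k x) (hw : w ∈ contactDistribution φ k x)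
    (hi : i + (k + 1) < m) : intExtDer (contactForm φ i) x v w = 0 := by
  obtain ⟨j, hj, hjk⟩ : ∃ j : Fin m, j.castSucc.castSucc = i.succ.castSucc ∧ j + k < m :=
    ⟨⟨i + 1, by omega⟩, rfl, show (i : ℕ) + 1 + k < m by omega⟩
  have hdφ : DifferentiableAt ℝ φ x := hφ.differentiableAt two_ne_zero
  have hv0 := mem_contactDistribution.1 hv j hjk
  have hw0 := mem_contactDistribution.1 hw j hjk
  rw [contactForm_apply hdφ, hj] at hv0 hw0
  rw [intExtDer_contactForm_apply hφ]
  linear_combination fderiv ℝ φ x v (Fin.last (m + 1)) * hw0 -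
    fderiv ℝ φ x w (Fin.last (m + 1)) * hv0

theorem lieBracket_apply_mem_contactDistribution_succ (hφ : ContDiffAt ℝ 2 φ x)
    (hX : DifferentiableAt ℝ X x) (hY : DifferentiableAt ℝ Y x)
    (hXk : ∀ᶠ y in 𝓝 x, X y ∈ contactDistribution φ k y)
    (hYk : ∀ᶠ y in 𝓝 x, Y y ∈ contactDistribution φ k y) :
    lieBracket X Y x ∈ contactDistribution φ (k + 1) x := by
  refine mem_contactDistribution.2 fun i hi => ?_
  rw [apply_lieBracket_eq_neg_intExtDer (differentiableAt_contactForm hφ) hX hY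
    (hXk.mono fun y hy => mem_contactDistribution.1 hy i (by omega))
    (hYk.mono fun y hy => mem_contactDistribution.1 hy i (by omega)),
    intExtDer_contactForm_apply_eq_zero hφ hXk.self_of_nhds hYk.self_of_nhds hi, neg_zero]

end ContactForms

section ChainField

variable {m : ℕ}

/-- The linear part of `chainField`. -/
def chainShift (m : ℕ) : (Fin (m + 2) → ℝ) →L[ℝ] (Fin (m + 2) → ℝ) :=
  ContinuousLinearMap.pi <| Fin.snoc (n := m + 1) (α := fun _ => (Fin (m + 2) → ℝ) →L[ℝ] ℝ)
    (Fin.snoc (α := fun _ => (Fin (m + 2) → ℝ) →L[ℝ] ℝ)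
      (fun i => ContinuousLinearMap.proj i.succ.castSucc) 0) 0

/-- The vector field `(z₂, …, zₙ₋₁, 0, 1)` multiplying `v₁` in the triangular form, `n = m + 2`. -/
def chainField (m : ℕ) : VF (m + 2) := fun z => chainShift m z + Pi.single (Fin.last (m + 1)) 1

@[simp]
theorem chainField_castSucc_castSucc (z : Fin (m + 2) → ℝ) (i : Fin m) :
    chainField m z i.castSucc.castSucc = z i.succ.castSucc := by
  simp [chainField, chainShift, Fin.castSucc_ne_last]

@[simp]
theorem chainField_castSucc_last (z : Fin (m + 2) → ℝ) :
    chainField m z (Fin.last m).castSucc = 0 := by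
  simp [chainField, chainShift, Fin.castSucc_ne_last]

@[simp]
theorem chainField_last (z : Fin (m + 2) → ℝ) : chainField m z (Fin.last (m + 1)) = 1 := by
  simp [chainField, chainShift]

theorem hasFDerivAt_chainField (z : Fin (m + 2) → ℝ) :
    HasFDerivAt (chainField m) (chainShift m) z :=
  (chainShift m).hasFDerivAt.add_const _

theorem chainShift_single_succ (i : Fin m) :
    chainShift m (Pi.single i.succ.castSucc 1) = Pi.single i.castSucc.castSucc 1 := by
  ext j
  refine Fin.lastCases ?_ (Fin.lastCases ?_ fun l => ?_) j
  · simp [chainShift]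
  · simp [chainShift]
  · simp [chainShift, Pi.single_apply]

theorem lieBracket_single_chainField (i : Fin m) (z : Fin (m + 2) → ℝ) :
    lieBracket (fun _ => Pi.single i.succ.castSucc 1) (chainField m) z =
      Pi.single i.castSucc.castSucc 1 := by
  rw [lieBracket, (hasFDerivAt_chainField z).fderiv, chainShift_single_succ]
  simp

end ChainField

section Charts

variable {n : ℕ} {V : Set (Fin n → ℝ)} {φ ψ : VF n} {x q : Fin n → ℝ}

theorem fderiv_apply_lieBracket_eq_of_eventuallyEq {X Y A B : VF n} (hφ : ContDiffAt ℝ 2 φ x)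
    (hX : DifferentiableAt ℝ X x) (hY : DifferentiableAt ℝ Y x)
    (hA : DifferentiableAt ℝ A (φ x)) (hB : DifferentiableAt ℝ B (φ x))
    (hXA : (fun y => fderiv ℝ φ y (X y)) =ᶠ[𝓝 x] A ∘ φ)
    (hYB : (fun y => fderiv ℝ φ y (Y y)) =ᶠ[𝓝 x] B ∘ φ) :
    fderiv ℝ φ x (lieBracket X Y x) = lieBracket A B (φ x) := by
  have hdφ : DifferentiableAt ℝ φ x := hφ.differentiableAt two_ne_zero
  calc fderiv ℝ φ x (lieBracket X Y x)
      = fderiv ℝ (fun y => fderiv ℝ φ y (Y y)) x (X x) -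
          fderiv ℝ (fun y => fderiv ℝ φ y (X y)) x (Y x) :=
        VectorField.fderiv_apply_lieBracket hφ (by simp) hY hX
    _ = fderiv ℝ (B ∘ φ) x (X x) - fderiv ℝ (A ∘ φ) x (Y x) := by
        rw [hXA.fderiv_eq, hYB.fderiv_eq]
    _ = fderiv ℝ B (φ x) (fderiv ℝ φ x (X x)) - fderiv ℝ A (φ x) (fderiv ℝ φ x (Y x)) := by
        simp [fderiv_comp x hB hdφ, fderiv_comp x hA hdφ]
    _ = lieBracket A B (φ x) := by
        rw [hXA.eq_of_nhds, hYB.eq_of_nhds]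
        rfl

/-- `φ` is a smooth diffeomorphism of the open set `V` onto the open set `φ(V)`, with inverse
`ψ`. -/
structure IsChartOn (V : Set (Fin n → ℝ)) (φ ψ : VF n) : Prop where
  isOpen_source : IsOpen V
  contDiffOn : ContDiffOn ℝ (⊤ : ℕ∞) φ V
  isOpen_image : IsOpen (φ '' V)
  contDiffOn_symm : ContDiffOn ℝ (⊤ : ℕ∞) ψ (φ '' V)
  leftInvOn : Set.LeftInvOn ψ φ V

namespace IsChartOn

theorem contDiffAt (h : IsChartOn V φ ψ) (hx : x ∈ V) : ContDiffAt ℝ 2 φ x :=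
  (h.contDiffOn.contDiffAt (h.isOpen_source.mem_nhds hx)).of_le (WithTop.coe_le_coe.2 le_top)

theorem differentiableAt (h : IsChartOn V φ ψ) (hx : x ∈ V) : DifferentiableAt ℝ φ x :=
  (h.contDiffAt hx).differentiableAt two_ne_zero

theorem contDiffAt_symm (h : IsChartOn V φ ψ) (hx : x ∈ V) : ContDiffAt ℝ 2 ψ (φ x) :=
  (h.contDiffOn_symm.contDiffAt (h.isOpen_image.mem_nhds (Set.mem_image_of_mem φ hx))).of_le
    (WithTop.coe_le_coe.2 le_top)

theorem leftInverse_fderiv (h : IsChartOn V φ ψ) (hx : x ∈ V) :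
    Function.LeftInverse (fderiv ℝ ψ (φ x)) (fderiv ℝ φ x) := by
  have hid : ψ ∘ φ =ᶠ[𝓝 x] id := h.leftInvOn.eqOn.eventuallyEq_of_mem
    (h.isOpen_source.mem_nhds hx)
  have hcomp := fderiv_comp x ((h.contDiffAt_symm hx).differentiableAt two_ne_zero)
    (h.differentiableAt hx)
  rw [hid.fderiv_eq, fderiv_id] at hcomp
  exact fun v => (DFunLike.congr_fun hcomp v).symm

theorem injective_fderiv (h : IsChartOn V φ ψ) (hx : x ∈ V) :
    Function.Injective (fderiv ℝ φ x) :=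
  (h.leftInverse_fderiv hx).injective

theorem rightInverse_fderiv (h : IsChartOn V φ ψ) (hx : x ∈ V) :
    Function.RightInverse (fderiv ℝ ψ (φ x)) (fderiv ℝ φ x) :=
  (h.leftInverse_fderiv hx).rightInverse_of_surjective
    (LinearMap.surjective_of_injective (f := (fderiv ℝ φ x).toLinearMap) (h.injective_fderiv hx))

theorem exists_constant_coordinates (h : IsChartOn V φ ψ) (hq : q ∈ V) (v : Fin n → ℝ) :
    ∃ Y : VF n, DifferentiableAt ℝ Y q ∧ Y q = v ∧
      ∀ x ∈ V, fderiv ℝ φ x (Y x) = fderiv ℝ φ q v := by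
  refine ⟨fun x => fderiv ℝ ψ (φ x) (fderiv ℝ φ q v), ?_, h.leftInverse_fderiv hq v,
    fun x hx => h.rightInverse_fderiv hx _⟩
  have hdψ : DifferentiableAt ℝ (fderiv ℝ ψ) (φ q) :=
    differentiableAt_fderiv_of_contDiffAt_two (h.contDiffAt_symm hq)
  exact (hdψ.comp q (h.differentiableAt hq)).clm_apply (differentiableAt_const _)

end IsChartOn

end Charts

section ChainedDistributions

variable {m k : ℕ} {U V : Set (Fin (m + 2) → ℝ)} {Δ : Set (VF (m + 2))} {φ ψ : VF (m + 2)}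
  {q : Fin (m + 2) → ℝ}

/-- In the chart `φ` on `V ⊆ U`, the distribution `Δ` on `U` is locally spanned by the two input
vector fields `chainField` and `∂/∂zₙ₋₁` of the triangular form, `n = m + 2`: it contains both near
every point, and it is annihilated by the contact forms of `φ`. -/
structure IsChainedOn (U V : Set (Fin (m + 2) → ℝ)) (Δ : Set (VF (m + 2))) (φ ψ : VF (m + 2)) :
    Prop extends IsChartOn V φ ψ where
  isOpen : IsOpen U
  subset : V ⊆ U
  zero_mem : (fun _ => 0) ∈ Δ
  contDiffOn_of_mem : ∀ X ∈ Δ, ContDiffOn ℝ (⊤ : ℕ∞) X U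
  contactForm_apply_eq_zero : ∀ X ∈ Δ, ∀ x ∈ V, ∀ i, contactForm φ i x (X x) = 0
  exists_chainField : ∀ q ∈ V, ∃ X ∈ Δ,
    (fun x => fderiv ℝ φ x (X x)) =ᶠ[𝓝 q] chainField m ∘ φ
  exists_single : ∀ q ∈ V, ∃ X ∈ Δ,
    (fun x => fderiv ℝ φ x (X x)) =ᶠ[𝓝 q] fun _ => Pi.single (Fin.last m).castSucc 1

namespace IsChainedOn

variable {X : VF (m + 2)}

theorem differentiableAt_of_mem_derivedFlag (h : IsChainedOn U V Δ φ ψ) (hq : q ∈ V)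
    (hX : X ∈ derivedFlag U Δ k) : DifferentiableAt ℝ X q :=
  ((contDiffOn_of_mem_derivedFlag h.isOpen h.contDiffOn_of_mem k X hX).contDiffAt
    (h.isOpen.mem_nhds (h.subset hq))).differentiableAt (by simp)

theorem apply_mem_contactDistribution_of_mem_derivedFlag (h : IsChainedOn U V Δ φ ψ)
    (hX : X ∈ derivedFlag U Δ k) (hq : q ∈ V) : X q ∈ contactDistribution φ k q := by
  induction k generalizing X q with
  | zero => exact mem_contactDistribution.2 fun i _ => h.contactForm_apply_eq_zero X hX q hq i
  | succ k ih =>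
    have hVq : ∀ᶠ x in 𝓝 q, x ∈ V := h.isOpen_source.mem_nhds hq
    obtain ⟨Y, hY, Z, hZ, hX⟩ := hX
    rw [hX q (h.subset hq)]
    refine add_mem (contactDistribution_mono k.le_succ (ih hY hq))
      (apply_mem_of_mem_spanOn (h.subset hq) ?_ hZ)
    rintro _ ⟨A, hA, B, hB, rfl⟩
    exact lieBracket_apply_mem_contactDistribution_succ (h.contDiffAt hq)
      (h.differentiableAt_of_mem_derivedFlag hq hA) (h.differentiableAt_of_mem_derivedFlag hq hB)
      (hVq.mono fun x => ih hA) (hVq.mono fun x => ih hB)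

theorem exists_mem_lieFlag_single (h : IsChainedOn U V Δ φ ψ) (hq : q ∈ V) (j : Fin (m + 1)) :
    ∃ X ∈ lieFlag U Δ (m - j),
      (fun x => fderiv ℝ φ x (X x)) =ᶠ[𝓝 q] fun _ => Pi.single j.castSucc 1 := by
  induction j using Fin.reverseInduction with
  | last => simpa using! h.exists_single q hq
  | cast i ih =>
    obtain ⟨X, hX, hXi⟩ := ih
    obtain ⟨H, hH, hHφ⟩ := h.exists_chainField q hq
    have hk : m - (i.succ : ℕ) + 1 = m - (i.castSucc : ℕ) := by
      simp only [Fin.val_succ, Fin.val_castSucc]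
      omega
    refine ⟨lieBracket X H, hk ▸ lieBracket_mem_lieFlag_succ h.zero_mem hX hH, ?_⟩
    filter_upwards [hXi.eventuallyEq_nhds, hHφ.eventuallyEq_nhds, h.isOpen_source.mem_nhds hq]
      with x hXx hHx hxV
    exact (fderiv_apply_lieBracket_eq_of_eventuallyEq (h.contDiffAt hxV)
      (h.differentiableAt_of_mem_derivedFlag hxV (lieFlag_subset_derivedFlag _ hX))
      (h.differentiableAt_of_mem_derivedFlag hxV (subset_derivedFlag 0 hH))
      (differentiableAt_const _) (hasFDerivAt_chainField _).differentiableAt hXx hHx).trans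
      (lieBracket_single_chainField i _)

theorem contactDistribution_le_evalSpan_lieFlag (h : IsChainedOn U V Δ φ ψ) (hq : q ∈ V) :
    contactDistribution φ k q ≤ evalSpan (lieFlag U Δ k) q := by
  intro v hv
  rw [mem_contactDistribution] at hv
  set w := fderiv ℝ φ q v with hw
  let S := (evalSpan (lieFlag U Δ k) q).map (fderiv ℝ φ q).toLinearMap
  suffices hwS : w ∈ S by
    obtain ⟨v', hv', hvv'⟩ := hwS
    rwa [← h.injective_fderiv hq hvv']
  have hfield {X : VF (m + 2)} (hX : X ∈ lieFlag U Δ k) : fderiv ℝ φ q (X q) ∈ S :=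
    Submodule.mem_map_of_mem (apply_mem_evalSpan hX)
  obtain ⟨H, hH, hHφ⟩ := h.exists_chainField q hq
  have hHq : fderiv ℝ φ q (H q) = chainField m (φ q) := hHφ.eq_of_nhds
  have hchain : chainField m (φ q) ∈ S := hHq ▸ hfield (lieFlag_mono k.zero_le hH)
  have hsingle (j : Fin (m + 1)) (hj : m ≤ j + k) : Pi.single j.castSucc 1 ∈ S := by
    obtain ⟨X, hX, hXj⟩ := h.exists_mem_lieFlag_single hq j
    exact hXj.eq_of_nhds ▸ hfield (lieFlag_mono (by omega) hX)
  rw [← sub_add_cancel w (w (Fin.last (m + 1)) • chainField m (φ q))]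
  refine add_mem (mem_of_forall_single_mem fun j => ?_) (S.smul_mem _ hchain)
  refine Fin.lastCases (by simp) (Fin.lastCases (fun _ => hsingle _ (by simp)) fun i hi => ?_) j
  refine hsingle _ (not_lt.1 fun hik => hi ?_)
  have hvi := hv i hik
  rw [contactForm_apply (h.differentiableAt hq), ← hw] at hvi
  simpa [mul_comm] using hvi

theorem evalSpan_lieFlag (h : IsChainedOn U V Δ φ ψ) (hq : q ∈ V) :
    evalSpan (lieFlag U Δ k) q = contactDistribution φ k q :=
  le_antisymm
    (evalSpan_le_iff.2 fun _ hX =>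
      h.apply_mem_contactDistribution_of_mem_derivedFlag (lieFlag_subset_derivedFlag k hX) hq)
    (h.contactDistribution_le_evalSpan_lieFlag hq)

theorem evalSpan_derivedFlag (h : IsChainedOn U V Δ φ ψ) (hq : q ∈ V) :
    evalSpan (derivedFlag U Δ k) q = contactDistribution φ k q :=
  le_antisymm
    (evalSpan_le_iff.2 fun _ hX => h.apply_mem_contactDistribution_of_mem_derivedFlag hX hq)
    ((h.evalSpan_lieFlag hq).ge.trans (evalSpan_mono (lieFlag_subset_derivedFlag k)))

end IsChainedOn

theorem IsChartOn.finrank_contactDistribution (h : IsChartOn V φ ψ) (hq : q ∈ V) (hk : k ≤ m) :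
    Module.finrank ℝ (contactDistribution φ k q) = 2 + k := by
  let L : (Fin (m + 2) → ℝ) →ₗ[ℝ] (Fin (m - k) → ℝ) :=
    LinearMap.pi fun i => (contactForm φ (i.castLE (m.sub_le k)) q).toLinearMap
  have hker : LinearMap.ker L = contactDistribution φ k q := by
    ext v
    rw [mem_contactDistribution, LinearMap.mem_ker, funext_iff]
    exact ⟨fun hv i hi => hv ⟨i, by omega⟩, fun hv i => hv _ (show i + k < m by omega)⟩
  have hsurj : Function.Surjective L := by
    intro c
    let w : Fin (m + 2) → ℝ := fun j => if hj : j < m - k then c ⟨j, hj⟩ else 0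
    refine ⟨fderiv ℝ ψ (φ q) w, funext fun i => ?_⟩
    have hw : w (Fin.last (m + 1)) = 0 := dif_neg (show ¬m + 1 < m - k by omega)
    simp [L, contactForm_apply (h.differentiableAt hq), h.rightInverse_fderiv hq w, hw, w]
  have hrank := L.finrank_range_add_finrank_ker
  rw [LinearMap.range_eq_top.2 hsurj, finrank_top, hker] at hrank
  simp only [Module.finrank_fin_fun] at hrank
  omega

theorem IsChainedOn.evalDim_lieFlag (h : IsChainedOn U V Δ φ ψ) (hq : q ∈ V) (hk : k ≤ m) :
    evalDim (lieFlag U Δ k) q = 2 + k :=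
  (congrArg (fun D : Submodule ℝ _ => Module.finrank ℝ D) (h.evalSpan_lieFlag hq)).trans
    (h.finrank_contactDistribution hq hk)

theorem IsChainedOn.evalDim_derivedFlag (h : IsChainedOn U V Δ φ ψ) (hq : q ∈ V) (hk : k ≤ m) :
    evalDim (derivedFlag U Δ k) q = 2 + k :=
  (congrArg (fun D : Submodule ℝ _ => Module.finrank ℝ D) (h.evalSpan_derivedFlag hq)).trans
    (h.finrank_contactDistribution hq hk)

end ChainedDistributions

section Drift

variable {m k : ℕ} {U V : Set (Fin (m + 2) → ℝ)} {Δ : Set (VF (m + 2))} {φ ψ f : VF (m + 2)}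
  {q v : Fin (m + 2) → ℝ} {ω : OneForm (m + 2)} {i : Fin m}

namespace IsChainedOn

theorem contactForm_mem_annihilatorOn (h : IsChainedOn U V Δ φ ψ) (hi : i + k < m) :
    contactForm φ i ∈ annihilatorOn V (derivedFlag U Δ k) :=
  ⟨contDiffOn_contactForm h.isOpen_source h.contDiffOn, fun _ hX _ hx =>
    mem_contactDistribution.1 (h.apply_mem_contactDistribution_of_mem_derivedFlag hX hx) i hi⟩

theorem contactForm_apply_eq_zero_of_mem_assocOf (h : IsChainedOn U V Δ φ ψ) (hq : q ∈ V)
    (hv : v ∈ assocOf (annihilatorOn U (derivedFlag U Δ k)) q) (hi : i + k < m) :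
    contactForm φ i q v = 0 := by
  obtain ⟨η, hη, hηφ⟩ := exists_mem_annihilatorOn_eventuallyEq (U := U) h.isOpen_source hq
    (h.contactForm_mem_annihilatorOn hi)
  exact hηφ.eq_of_nhds ▸ (hv η hη).1

theorem intExtDer_contactForm_apply_eq_zero_of_mem_assocOf (h : IsChainedOn U V Δ φ ψ)
    (hq : q ∈ V) (hv : v ∈ assocOf (annihilatorOn U (derivedFlag U Δ k)) q) (hi : i + k < m)
    {X : VF (m + 2)} (hX : X ∈ derivedFlag U Δ k) : intExtDer (contactForm φ i) q v (X q) = 0 := by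
  obtain ⟨η, hη, hηφ⟩ := exists_mem_annihilatorOn_eventuallyEq (U := U) h.isOpen_source hq
    (h.contactForm_mem_annihilatorOn hi)
  rw [← intExtDer_congr hηφ]
  exact intExtDer_apply_eq_zero_of_mem_assocOf (h.subset hq) hv hη hX

theorem fderiv_apply_last_eq_zero_of_mem_assocOf (h : IsChainedOn U V Δ φ ψ) (hq : q ∈ V)
    (hk : k < m) (hv : v ∈ assocOf (annihilatorOn U (derivedFlag U Δ k)) q) :
    fderiv ℝ φ q v (Fin.last (m + 1)) = 0 := by
  obtain ⟨i, hi⟩ : ∃ i : Fin m, i + k + 1 = m :=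
    ⟨⟨m - k - 1, by omega⟩, show m - k - 1 + k + 1 = m by omega⟩
  obtain ⟨E, hE, hEφ⟩ := h.exists_mem_lieFlag_single hq i.succ
  have hEk : E ∈ derivedFlag U Δ k :=
    lieFlag_subset_derivedFlag k (lieFlag_mono (show m - (i + 1 : ℕ) ≤ k by omega) hE)
  have hEq : fderiv ℝ φ q (E q) = Pi.single i.succ.castSucc 1 := hEφ.eq_of_nhds
  have hvE := h.intExtDer_contactForm_apply_eq_zero_of_mem_assocOf hq hv (by omega : i + k < m) hEk
  rw [intExtDer_contactForm_apply (h.contDiffAt hq), hEq, Pi.single_eq_same,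
    Pi.single_eq_of_ne (Fin.castSucc_ne_last _).symm] at hvE
  simpa using hvE

theorem fderiv_apply_castSucc_eq_zero_of_mem_assocOf (h : IsChainedOn U V Δ φ ψ) (hq : q ∈ V)
    (hk : k < m) (hv : v ∈ assocOf (annihilatorOn U (derivedFlag U Δ k)) q) {j : Fin (m + 1)}
    (hj : j + k ≤ m) : fderiv ℝ φ q v j.castSucc = 0 := by
  have hlast := h.fderiv_apply_last_eq_zero_of_mem_assocOf hq hk hv
  rcases hj.lt_or_eq with hjk | hjk
  · induction j using Fin.lastCases with
    | last => simp at hjk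
    | cast i =>
      have hvi := h.contactForm_apply_eq_zero_of_mem_assocOf hq hv hjk
      simpa [contactForm_apply (h.differentiableAt hq), hlast] using hvi
  · induction j using Fin.cases with
    | zero => exact absurd hk (by simpa using hjk.ge)
    | succ i =>
      obtain ⟨H, hH, hHφ⟩ := h.exists_chainField q hq
      have hHq : fderiv ℝ φ q (H q) = chainField m (φ q) := hHφ.eq_of_nhds
      have hvH := h.intExtDer_contactForm_apply_eq_zero_of_mem_assocOf hq hv
        (show i + k < m by rw [Fin.val_succ] at hjk; omega) (subset_derivedFlag k hH)
      rw [intExtDer_contactForm_apply (h.contDiffAt hq), hlast, hHq, chainField_last] at hvH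
      linarith

end IsChainedOn

/-- The drift condition of the triangular form in the coordinates `φ`: `λᵢ(f)` is a function of
`φ₁, …, φᵢ₊₁, φₙ` only, where `λᵢ = contactForm φ i`. -/
def IsTriangularDriftOn (V : Set (Fin (m + 2) → ℝ)) (φ f : VF (m + 2)) : Prop :=
  ∀ i : Fin m, ∃ P : (Fin (m + 2) → ℝ) → ℝ,
    DependsOn P {j | j ≤ i.succ.castSucc ∨ j = Fin.last (m + 1)} ∧
      ∀ x ∈ V, DifferentiableAt ℝ P (φ x) ∧ contactForm φ i x (f x) = P (φ x)

namespace IsTriangularDriftOn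

theorem lieDerOneForm_contactForm_apply_eq_zero (hf : IsTriangularDriftOn V φ f) (hV : IsOpen V)
    (hq : q ∈ V) (hφ : ContDiffAt ℝ 2 φ q) (hfq : DifferentiableAt ℝ f q)
    (hv : ∀ j ≤ i.succ.castSucc, fderiv ℝ φ q v j = 0)
    (hlast : fderiv ℝ φ q v (Fin.last (m + 1)) = 0) :
    lieDerOneForm f (contactForm φ i) q v = 0 := by
  obtain ⟨P, hPdep, hP⟩ := hf i
  have hcomp : (fun x => contactForm φ i x (f x)) =ᶠ[𝓝 q] P ∘ φ :=
    eventually_of_mem (hV.mem_nhds hq) fun x hx => (hP x hx).2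
  have hPzero : fderiv ℝ P (φ q) (fderiv ℝ φ q v) = 0 := by
    refine fderiv_apply_eq_zero_of_dependsOn hPdep (hP q hq).1 ?_
    rintro j (hj | rfl)
    exacts [hv j hj, hlast]
  rw [lieDerOneForm_apply_eq_intExtDer_add (differentiableAt_contactForm hφ) hfq,
    intExtDer_contactForm_apply hφ, hv _ le_rfl, hlast, hcomp.fderiv_eq,
    fderiv_comp q (hP q hq).1 (hφ.differentiableAt two_ne_zero)]
  simpa using hPzero

theorem lieBracket_apply_mem_contactDistribution (hf : IsTriangularDriftOn V φ f)
    (h : IsChainedOn U V Δ φ ψ) (hq : q ∈ V) (hfq : DifferentiableAt ℝ f q)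
    (hk : k < m) {Y : VF (m + 2)} (hY : DifferentiableAt ℝ Y q)
    (hYk : ∀ᶠ x in 𝓝 q, Y x ∈ contactDistribution φ k x)
    (hYq : Y q ∈ assocOf (annihilatorOn U (derivedFlag U Δ k)) q) :
    lieBracket f Y q ∈ contactDistribution φ k q := by
  refine mem_contactDistribution.2 fun i hi => ?_
  have hlie : lieDerOneForm f (contactForm φ i) q (Y q) = 0 := by
    refine hf.lieDerOneForm_contactForm_apply_eq_zero h.isOpen_source hq (h.contDiffAt hq) hfq
      (fun j hj => ?_) (h.fderiv_apply_last_eq_zero_of_mem_assocOf hq hk hYq)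
    obtain ⟨j, rfl⟩ := Fin.exists_castSucc_eq.2 (hj.trans_lt (Fin.castSucc_lt_last _)).ne
    refine h.fderiv_apply_castSucc_eq_zero_of_mem_assocOf hq hk hYq ?_
    simp only [Fin.le_def, Fin.val_castSucc, Fin.val_succ] at hj
    omega
  have hzero : (fun x => contactForm φ i x (Y x)) =ᶠ[𝓝 q] 0 :=
    hYk.mono fun x hx => mem_contactDistribution.1 hx i hi
  rw [lieDerOneForm_apply_eq_sub_apply_lieBracket
    (differentiableAt_contactForm (h.contDiffAt hq)) hY, hzero.fderiv_eq] at hlie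
  simpa using hlie

theorem lieDerOneForm_mem_retractOf (hf : IsTriangularDriftOn V φ f)
    (h : IsChainedOn U V Δ φ ψ) (hq : q ∈ V) (hfq : DifferentiableAt ℝ f q) (hk : k < m)
    (hω : ω ∈ annihilatorOn U (derivedFlag U Δ k)) :
    lieDerOneForm f ω q ∈ retractOf (annihilatorOn U (derivedFlag U Δ k)) q := by
  intro v hv
  have hω0 {x} (hx : x ∈ V) {w} (hw : w ∈ contactDistribution φ k x) : ω x w = 0 :=
    apply_eq_zero_of_mem_evalSpan hω (h.subset hx) ((h.evalSpan_derivedFlag hx).ge hw)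
  have hωq : DifferentiableAt ℝ ω q :=
    (hω.1.contDiffAt (h.isOpen.mem_nhds (h.subset hq))).differentiableAt (by simp)
  obtain ⟨Y, hY, rfl, hYφ⟩ := h.exists_constant_coordinates hq v
  have hYk : ∀ x ∈ V, Y x ∈ contactDistribution φ k x := by
    refine fun x hx => mem_contactDistribution.2 fun i hi => ?_
    rw [contactForm_apply (h.differentiableAt hx), hYφ x hx,
      h.fderiv_apply_castSucc_eq_zero_of_mem_assocOf hq hk hv (by simpa using hi.le),
      h.fderiv_apply_last_eq_zero_of_mem_assocOf hq hk hv, mul_zero, sub_zero]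
  have hωY : (fun x => ω x (Y x)) =ᶠ[𝓝 q] 0 :=
    eventually_of_mem (h.isOpen_source.mem_nhds hq) fun x hx => hω0 hx (hYk x hx)
  have hbracket : lieBracket f Y q ∈ contactDistribution φ k q :=
    hf.lieBracket_apply_mem_contactDistribution h hq hfq hk hY
      (eventually_of_mem (h.isOpen_source.mem_nhds hq) hYk) hv
  rw [lieDerOneForm_apply_eq_sub_apply_lieBracket hωq hY, hωY.fderiv_eq, hω0 hq hbracket]
  simp

end IsTriangularDriftOn

end Drift

section TriangularForm

variable {m : ℕ} {Φ : ℕ → (Fin (m + 2) → ℝ) → ℝ} {z x f g₁ g₂ : Fin (m + 2) → ℝ}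
  {L : (Fin (m + 2) → ℝ) →L[ℝ] (Fin (m + 2) → ℝ)} {a : Fin 2 → ℝ} {b : Fin 2 → Fin 2 → ℝ}
  {φ : VF (m + 2)}

theorem triRHS_castSucc_castSucc (v : Fin 2 → ℝ) (i : Fin m) :
    triRHS (m + 2) Φ z v i.castSucc.castSucc = Φ i z + z i.succ.castSucc * v 0 :=
  dif_pos (show (i : ℕ) + 3 ≤ m + 2 by omega)

theorem triRHS_castSucc_last (v : Fin 2 → ℝ) :
    triRHS (m + 2) Φ z v (Fin.last m).castSucc = v 1 := by
  simp [triRHS]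

theorem triRHS_last (v : Fin 2 → ℝ) : triRHS (m + 2) Φ z v (Fin.last (m + 1)) = v 0 := by
  simp [triRHS]

theorem triRHS_eq_add (v : Fin 2 → ℝ) :
    triRHS (m + 2) Φ z v = triRHS (m + 2) Φ z 0 + v 0 • chainField m z +
      v 1 • Pi.single (Fin.last m).castSucc 1 := by
  ext j
  refine Fin.lastCases ?_ (Fin.lastCases ?_ fun i => ?_) j
  · simp [triRHS_last]
  · simp [triRHS_castSucc_last]
  · simp [triRHS_castSucc_castSucc, mul_comm]

/-- The closed-loop equation of the triangular form at one point: `f`, `g₁`, `g₂` are the values of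
the vector fields there, `a` and `b` the values of the feedback, `z` the new coordinates of the
point and `L` the differential of the coordinate change. -/
def IsTriangularizedBy (L : (Fin (m + 2) → ℝ) →L[ℝ] (Fin (m + 2) → ℝ))
    (Φ : ℕ → (Fin (m + 2) → ℝ) → ℝ) (z f g₁ g₂ : Fin (m + 2) → ℝ) (a : Fin 2 → ℝ)
    (b : Fin 2 → Fin 2 → ℝ) : Prop :=
  ∀ v : Fin 2 → ℝ, L (f + (a 0 + b 0 0 * v 0 + b 0 1 * v 1) • g₁ +
    (a 1 + b 1 0 * v 0 + b 1 1 * v 1) • g₂) = triRHS (m + 2) Φ z v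

namespace IsTriangularizedBy

theorem apply_drift (h : IsTriangularizedBy L Φ z f g₁ g₂ a b) :
    L (f + a 0 • g₁ + a 1 • g₂) = triRHS (m + 2) Φ z 0 := by
  simpa using h 0

theorem apply_input (h : IsTriangularizedBy L Φ z f g₁ g₂ a b) (v : Fin 2 → ℝ) :
    L ((b 0 0 * v 0 + b 0 1 * v 1) • g₁ + (b 1 0 * v 0 + b 1 1 * v 1) • g₂) =
      v 0 • chainField m z + v 1 • Pi.single (Fin.last m).castSucc 1 := by
  have hv := h v
  rw [triRHS_eq_add, ← h.apply_drift] at hv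
  simp only [map_add, map_smul, add_smul] at hv ⊢
  linear_combination hv

theorem apply_first_input (h : IsTriangularizedBy L Φ z f g₁ g₂ a b) :
    L (b 0 0 • g₁ + b 1 0 • g₂) = chainField m z := by
  simpa using h.apply_input ![1, 0]

theorem apply_second_input (h : IsTriangularizedBy L Φ z f g₁ g₂ a b) :
    L (b 0 1 • g₁ + b 1 1 • g₂) = Pi.single (Fin.last m).castSucc 1 := by
  simpa using h.apply_input ![0, 1]

theorem contactForm_apply_eq_zero
    (h : IsTriangularizedBy (fderiv ℝ φ x) Φ (φ x) f g₁ g₂ a b) (hφ : DifferentiableAt ℝ φ x)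
    (hb : b 0 0 * b 1 1 - b 0 1 * b 1 0 ≠ 0) (i : Fin m) :
    contactForm φ i x g₁ = 0 ∧ contactForm φ i x g₂ = 0 := by
  have hfirst : contactForm φ i x (b 0 0 • g₁ + b 1 0 • g₂) = 0 := by
    simp [contactForm_apply hφ, h.apply_first_input]
  have hsecond : contactForm φ i x (b 0 1 • g₁ + b 1 1 • g₂) = 0 := by
    rw [contactForm_apply hφ, h.apply_second_input]
    simp [Fin.ext_iff, i.isLt.ne]
  simp only [map_add, map_smul, smul_eq_mul] at hfirst hsecond
  constructor
  · refine (mul_eq_zero.1 ?_).resolve_left hb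
    linear_combination b 1 1 * hfirst - b 1 0 * hsecond
  · refine (mul_eq_zero.1 ?_).resolve_left hb
    linear_combination b 0 0 * hsecond - b 0 1 * hfirst

theorem contactForm_apply_drift
    (h : IsTriangularizedBy (fderiv ℝ φ x) Φ (φ x) f g₁ g₂ a b) (hφ : DifferentiableAt ℝ φ x)
    (hb : b 0 0 * b 1 1 - b 0 1 * b 1 0 ≠ 0) (i : Fin m) :
    contactForm φ i x f = Φ i (φ x) := by
  obtain ⟨hg₁, hg₂⟩ := h.contactForm_apply_eq_zero hφ hb i
  calc contactForm φ i x f = contactForm φ i x (f + a 0 • g₁ + a 1 • g₂) := by simp [hg₁, hg₂]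
    _ = Φ i (φ x) := by
      simp [contactForm_apply hφ, h.apply_drift, triRHS_castSucc_castSucc, triRHS_last]

end IsTriangularizedBy

end TriangularForm

section Necessity

variable {m : ℕ} {U V : Set (Fin (m + 2) → ℝ)} {φ ψ f g₁ g₂ : VF (m + 2)} {p : Fin (m + 2) → ℝ}
  {α : (Fin (m + 2) → ℝ) → Fin 2 → ℝ} {β : (Fin (m + 2) → ℝ) → Fin 2 → Fin 2 → ℝ}
  {Φ : ℕ → (Fin (m + 2) → ℝ) → ℝ}

theorem IsChartOn.isChainedOn_spanOn (h : IsChartOn V φ ψ) (hU : IsOpen U) (hVU : V ⊆ U)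
    (hg₁ : ContDiffOn ℝ (⊤ : ℕ∞) g₁ U) (hg₂ : ContDiffOn ℝ (⊤ : ℕ∞) g₂ U)
    (hβ : ∀ i j, ContDiffOn ℝ (⊤ : ℕ∞) (fun x => β x i j) V)
    (hdet : ∀ x ∈ V, β x 0 0 * β x 1 1 - β x 0 1 * β x 1 0 ≠ 0)
    (htri : ∀ x ∈ V,
      IsTriangularizedBy (fderiv ℝ φ x) Φ (φ x) (f x) (g₁ x) (g₂ x) (α x) (β x)) :
    IsChainedOn U V (spanOn U {g₁, g₂}) φ ψ where
  toIsChartOn := h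
  isOpen := hU
  subset := hVU
  zero_mem := zero_mem_spanOn
  contDiffOn_of_mem X hX := contDiffOn_of_mem_spanOn (by simpa using ⟨hg₁, hg₂⟩) hX
  contactForm_apply_eq_zero X hX x hx i :=
    apply_mem_of_mem_spanOn (D := LinearMap.ker (contactForm φ i x).toLinearMap) (hVU hx)
      (by simpa using (htri x hx).contactForm_apply_eq_zero (h.differentiableAt hx) (hdet x hx) i)
      hX
  exists_chainField q hq := by
    obtain ⟨X, hX, hXβ⟩ := exists_mem_spanOn_pair_eventuallyEq (U := U) (X := g₁) (Y := g₂)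
      h.isOpen_source hq (hβ 0 0) (hβ 1 0)
    refine ⟨X, hX, ?_⟩
    filter_upwards [hXβ, h.isOpen_source.mem_nhds hq] with x hXx hx
    rw [hXx, (htri x hx).apply_first_input, Function.comp_apply]
  exists_single q hq := by
    obtain ⟨X, hX, hXβ⟩ := exists_mem_spanOn_pair_eventuallyEq (U := U) (X := g₁) (Y := g₂)
      h.isOpen_source hq (hβ 0 1) (hβ 1 1)
    refine ⟨X, hX, ?_⟩
    filter_upwards [hXβ, h.isOpen_source.mem_nhds hq] with x hXx hx
    rw [hXx, (htri x hx).apply_second_input]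

theorem IsTriangularizableAt.exists_isChainedOn (hU : IsOpen U)
    (hg₁ : ContDiffOn ℝ (⊤ : ℕ∞) g₁ U) (hg₂ : ContDiffOn ℝ (⊤ : ℕ∞) g₂ U)
    (h : IsTriangularizableAt (m + 2) U f g₁ g₂ p) :
    ∃ V, p ∈ V ∧ ∃ φ ψ, IsChainedOn U V (spanOn U {g₁, g₂}) φ ψ ∧ IsTriangularDriftOn V φ f := by
  obtain ⟨V, hV, hpV, hVU, φ, ψ, hφ, hφV, hψ, hψφ, α, β, -, hβ, hdet, Φ, hΦ, hΦdep, htri⟩ := h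
  have hchart : IsChartOn V φ ψ := ⟨hV, hφ, hφV, hψ, hψφ⟩
  refine ⟨V, hpV, φ, ψ, hchart.isChainedOn_spanOn hU hVU hg₁ hg₂ hβ hdet htri, fun i =>
    ⟨Φ i, fun z z' hzz' => hΦdep i (by omega) z z' fun j hj => hzz' j ?_, fun x hx => ⟨?_, ?_⟩⟩⟩
  · exact hj.imp (by simpa [Fin.le_def] using ·) (by simpa [Fin.ext_iff] using ·)
  · exact ((hΦ i (by omega)).contDiffAt (hφV.mem_nhds (Set.mem_image_of_mem φ hx))).differentiableAt
      (by simp)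
  · exact IsTriangularizedBy.contactForm_apply_drift (htri x hx) (hchart.differentiableAt hx)
      (hdet x hx) i

end Necessity

end

/-- **necessity in the main theorem.** If the system
`ẋ = f(x) + g₁(x)u₁ + g₂(x)u₂` is transformable into the triangular form (3) near `p ∈ U`,
then there exists an open neighborhood `W ⊆ U` of `p` on which conditions 1) and 2)
of the main theorem hold. -/
theorem main_theorem_necessity {n : ℕ} (hn : 2 ≤ n) (U : Set (Fin n → ℝ)) (hU : IsOpen U)
    (f g1 g2 : VF n)
    (hf : ContDiffOn ℝ (⊤ : ℕ∞) f U) (hg1 : ContDiffOn ℝ (⊤ : ℕ∞) g1 U) (hg2 : ContDiffOn ℝ (⊤ : ℕ∞) g2 U)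
    (p : Fin n → ℝ) (hp : p ∈ U)
    (htri : IsTriangularizableAt n U f g1 g2 p) :
    ∃ W : Set (Fin n → ℝ), IsOpen W ∧ p ∈ W ∧ W ⊆ U ∧
      MainConditionsOn n U W f g1 g2 := by
  obtain ⟨m, rfl⟩ := Nat.exists_eq_add_of_le' hn
  obtain ⟨V, hpV, φ, ψ, hchain, hdrift⟩ := htri.exists_isChainedOn hU hg1 hg2
  refine ⟨V, hchain.isOpen_source, hpV, hchain.subset, fun k hk q hq => ?_,
    fun k _ hk q hq ω hω => ?_⟩
  · exact ⟨hchain.evalDim_lieFlag hq (by omega), hchain.evalDim_derivedFlag hq (by omega)⟩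
  · have hfq : DifferentiableAt ℝ f q :=
      (hf.contDiffAt (hU.mem_nhds (hchain.subset hq))).differentiableAt (by simp)
    exact hdrift.lieDerOneForm_mem_retractOf hchain hq hfq (by omega) hω

end
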